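/- Let x and x̄ be two piecewise constant functional order parameters. Then for every q ∈ [0,1], y ∈ ℝ and β ≥ 0, the Parisi functions satisfy |f(q,y;x,β) − f(q,y;x̄,β)| ≤ (β²/2) ∫_q^1 |x(q′) − x̄(q′)| dq′. In particular f is pointwise continuous in x with respect to the L¹([0,1],dq) norm. -/

import Mathlib

open MeasureTheory ProbabilityTheory Filter

noncomputable section

/-! ## Gaussian disorder -/

/-- The standard (centered, unit variance) Gaussian measure on `ℝ`. -/
def stdGauss : Measure ℝ := gaussianReal 0 1

instance : IsProbabilityMeasure stdGauss := by unfold stdGauss; infer_instance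

/-- `N` i.i.d. standard Gaussian variables. -/
def gaussN (N : ℕ) : Measure (Fin N → ℝ) := Measure.pi fun _ => stdGauss

instance (N : ℕ) : IsProbabilityMeasure (gaussN N) := by unfold gaussN; infer_instance

/-- The i.i.d. standard Gaussian couplings `J_{ij}` (only entries with `i < j` are used). -/
def gaussC (N : ℕ) : Measure (Fin N → Fin N → ℝ) := Measure.pi fun _ => gaussN N

instance (N : ℕ) : IsProbabilityMeasure (gaussC N) := by unfold gaussC; infer_instance

/-- The i.i.d. standard Gaussian one-body fields `J_i^a`, `a = 1, …, K`
(row `⟨a-1⟩ : Fin K` corresponds to the level `a` of the paper). -/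
def gaussS (K N : ℕ) : Measure (Fin K → Fin N → ℝ) := Measure.pi fun _ => gaussN N

instance (K N : ℕ) : IsProbabilityMeasure (gaussS K N) := by unfold gaussS; infer_instance

/-- I.i.d. standard Gaussian couplings indexed by subsets of sites, for the p-spin model
(only the cardinality-`p` subsets are used). -/
def gaussP (N : ℕ) : Measure (Finset (Fin N) → ℝ) := Measure.pi fun _ => stdGauss

instance (N : ℕ) : IsProbabilityMeasure (gaussP N) := by unfold gaussP; infer_instance

/-! ## Spins and overlaps -/

/-- The spin value (`±1`) of a Boolean configuration entry. -/
def spin (b : Bool) : ℝ := if b then 1 else -1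

/-- The overlap `q₁₂ = N⁻¹ ∑ᵢ σᵢ⁽¹⁾ σᵢ⁽²⁾` of two replicas. -/
def overlap (N : ℕ) (σ τ : Fin N → Bool) : ℝ := (N : ℝ)⁻¹ * ∑ i, spin (σ i) * spin (τ i)

/-! ## Piecewise constant functional order parameters and the Parisi function -/

/-- One backward step of the Parisi recursion on an interval of constancy of the
functional order parameter: from `g = f(q_a, ·)`, with value `m` of the order parameter
and `s = q_a - q`, produce `f(q, ·)`. -/
def pStep (m s : ℝ) (g : ℝ → ℝ) (y : ℝ) : ℝ :=
  if m = 0 then ∫ z, g (y + z * Real.sqrt s) ∂stdGauss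
  else m⁻¹ * Real.log (∫ z, Real.exp (m * g (y + z * Real.sqrt s)) ∂stdGauss)

/-- `parisiLevel K q m β j` is the Parisi function `f(q_{K-j}, ·; x, β)` at the node
`q_{K-j}`, obtained by `j` backward steps from the final condition `f(q_K, y) = log cosh (β y)`. -/
def parisiLevel (K : ℕ) (q m : ℕ → ℝ) (β : ℝ) : ℕ → ℝ → ℝ
  | 0 => fun y => Real.log (Real.cosh (β * y))
  | j + 1 => pStep (m (K - j)) (q (K - j) - q (K - j - 1)) (parisiLevel K q m β j)

/-- The Parisi function `f(r, y; x, β)` for a piecewise constant order parameter `x`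
given by nodes `q` and values `m`:  for `q_{a-1} ≤ r ≤ q_a` it is obtained from
`f(q_a, ·)` by one backward step with value `m_a` over a time `q_a - r`. -/
def parisiF (K : ℕ) (q m : ℕ → ℝ) (β : ℝ) (r y : ℝ) : ℝ :=
  pStep (m (sInf {a : ℕ | r ≤ q a})) (q (sInf {a : ℕ | r ≤ q a}) - r)
    (parisiLevel K q m β (K - sInf {a : ℕ | r ≤ q a})) y

/-- The functional order parameter as a function: `x(r) = m_a` for `q_{a-1} ≤ r < q_a`,
and `x(1) = m_K`. -/
def xFun (K : ℕ) (q m : ℕ → ℝ) (r : ℝ) : ℝ :=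
  if 1 ≤ r then m K else m (sInf {a : ℕ | r < q a})

/-- A piecewise constant functional order parameter:
`0 = q_0 ≤ q_1 ≤ … ≤ q_K = 1`, `0 ≤ m_1 ≤ … ≤ m_K ≤ 1`,
with the conventions `m_0 = 0`, `m_{K+1} = 1`. -/
structure OrderParam where
  K : ℕ
  hK : 1 ≤ K
  q : ℕ → ℝ
  m : ℕ → ℝ
  hq0 : q 0 = 0
  hqK : q K = 1
  hq_mono : ∀ a, a < K → q a ≤ q (a + 1)
  hm0 : m 0 = 0
  hmtop : m (K + 1) = 1
  hm1 : 0 ≤ m 1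
  hm_mono : ∀ a, 1 ≤ a → a < K → m a ≤ m (a + 1)
  hmK : m K ≤ 1

/-- Guerra's trial function `ᾱ(β, h; x) = log 2 + f(0, h; x, β) - (β²/2) ∫₀¹ r x(r) dr`. -/
def trialAlpha (K : ℕ) (q m : ℕ → ℝ) (β h : ℝ) : ℝ :=
  Real.log 2 + parisiLevel K q m β K h - β ^ 2 / 2 * ∫ r in (0 : ℝ)..1, r * xFun K q m r

/-! ## The Sherrington–Kirkpatrick model -/

/-- The SK Hamiltonian `H_N(σ, h, J) = -(1/√N) ∑_{i<j} J_{ij} σ_i σ_j - h ∑_i σ_i`. -/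
def hamSK (N : ℕ) (h : ℝ) (Jc : Fin N → Fin N → ℝ) (σ : Fin N → Bool) : ℝ :=
  -(1 / Real.sqrt N) * ∑ i, ∑ j, (if i < j then Jc i j * spin (σ i) * spin (σ j) else 0)
    - h * ∑ i, spin (σ i)

/-- The SK partition function `Z_N(β, h, J)`. -/
def ZSK (N : ℕ) (β h : ℝ) (Jc : Fin N → Fin N → ℝ) : ℝ :=
  ∑ σ : Fin N → Bool, Real.exp (-(β * hamSK N h Jc σ))

/-- The quenched average `N⁻¹ E log Z_N(β, h, J)`. -/
def quenchedFE (N : ℕ) (β h : ℝ) : ℝ :=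
  (N : ℝ)⁻¹ * ∫ Jc, Real.log (ZSK N β h Jc) ∂gaussC N

/-- The ground state energy density `e_N(J, h)`, defined by
`-e_N(J, h) = N⁻¹ min_σ H_N(σ, h, J)`. -/
def eGS (N : ℕ) (h : ℝ) (Jc : Fin N → Fin N → ℝ) : ℝ :=
  -((N : ℝ)⁻¹ * ⨅ σ : Fin N → Bool, hamSK N h Jc σ)

/-- The quenched ground state energy density `e_N(h) = E(e_N(J, h))`. -/
def eQuenched (N : ℕ) (h : ℝ) : ℝ := ∫ Jc, eGS N h Jc ∂gaussC N

/-! ## The interpolating system -/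

/-- The interpolating Boltzmann factor. -/
def bFac (N K : ℕ) (β h t : ℝ) (q : ℕ → ℝ) (Jc : Fin N → Fin N → ℝ)
    (Js : Fin K → Fin N → ℝ) (σ : Fin N → Bool) : ℝ :=
  Real.exp (β * Real.sqrt (t / N) *
        ∑ i, ∑ j, (if i < j then Jc i j * spin (σ i) * spin (σ j) else 0)
      + β * h * ∑ i, spin (σ i)
      + β * Real.sqrt (1 - t) *
          ∑ a : Fin K, Real.sqrt (q (a.val + 1) - q a.val) * ∑ i, Js a i * spin (σ i))

/-- The interpolating partition function `Z̃_N(β, h; t; x; J)`. -/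
def Ztil (N K : ℕ) (β h t : ℝ) (q : ℕ → ℝ) (Jc : Fin N → Fin N → ℝ)
    (Js : Fin K → Fin N → ℝ) : ℝ :=
  ∑ σ : Fin N → Bool, bFac N K β h t q Jc Js σ

/-- `Wrec … j` is the random variable `Z_{K-j}`:  `Z_K = Z̃_N` and
`Z_{a-1} = (E_a (Z_a^{m_a}))^{1/m_a}`, where `E_a` integrates the Gaussian row `J^a`. -/
def Wrec (N K : ℕ) (β h t : ℝ) (q m : ℕ → ℝ) :
    ℕ → (Fin N → Fin N → ℝ) → (Fin K → Fin N → ℝ) → ℝ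
  | 0 => Ztil N K β h t q
  | j + 1 => fun Jc Js =>
      if hj : j < K then
        (∫ g : Fin N → ℝ,
            (Wrec N K β h t q m j Jc (Function.update Js ⟨K - 1 - j, by omega⟩ g)) ^ m (K - j)
          ∂gaussN N) ^ (m (K - j))⁻¹
      else Wrec N K β h t q m j Jc Js

/-- `Zrec … a` is the random variable `Z_a` of the broken replica interpolation. -/
def Zrec (N K : ℕ) (β h t : ℝ) (q m : ℕ → ℝ) (a : ℕ) :
    (Fin N → Fin N → ℝ) → (Fin K → Fin N → ℝ) → ℝ :=
  Wrec N K β h t q m (K - a)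

/-- The interpolating auxiliary function `α̃_N(t) = N⁻¹ E₀ log Z₀`. -/
def atilde (N K : ℕ) (β h : ℝ) (q m : ℕ → ℝ) (t : ℝ) : ℝ :=
  (N : ℝ)⁻¹ * ∫ Jc, Real.log (Wrec N K β h t q m K Jc 0) ∂gaussC N

/-- The normalized weight `f_a = Z_a^{m_a} / E_a(Z_a^{m_a}) = Z_a^{m_a} / Z_{a-1}^{m_a}`. -/
def fWeight (N K : ℕ) (β h t : ℝ) (q m : ℕ → ℝ) (a : ℕ) (Jc : Fin N → Fin N → ℝ)
    (Js : Fin K → Fin N → ℝ) : ℝ :=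
  Zrec N K β h t q m a Jc Js ^ m a / Zrec N K β h t q m (a - 1) Jc Js ^ m a

/-- The Gibbs expectation `ω(A)` of the interpolating Boltzmann factor. -/
def gibbs (N K : ℕ) (β h t : ℝ) (q : ℕ → ℝ) (A : (Fin N → Bool) → ℝ)
    (Jc : Fin N → Fin N → ℝ) (Js : Fin K → Fin N → ℝ) : ℝ :=
  (∑ σ : Fin N → Bool, A σ * bFac N K β h t q Jc Js σ) / Ztil N K β h t q Jc Js

/-- The two-replica Gibbs product expectation `Ω(A)`. -/
def gibbs2 (N K : ℕ) (β h t : ℝ) (q : ℕ → ℝ) (A : (Fin N → Bool) → (Fin N → Bool) → ℝ)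
    (Jc : Fin N → Fin N → ℝ) (Js : Fin K → Fin N → ℝ) : ℝ :=
  (∑ σ : Fin N → Bool, ∑ τ : Fin N → Bool,
      A σ τ * bFac N K β h t q Jc Js σ * bFac N K β h t q Jc Js τ) /
    Ztil N K β h t q Jc Js ^ 2

/-- `omT1 … A j` is the partially averaged state `ω̃_{K-j}(A)`:
`ω̃_K = ω` and `ω̃_{a-1}(·) = E_a (f_a ω̃_a(·))`. -/
def omT1 (N K : ℕ) (β h t : ℝ) (q m : ℕ → ℝ) (A : (Fin N → Bool) → ℝ) :
    ℕ → (Fin N → Fin N → ℝ) → (Fin K → Fin N → ℝ) → ℝ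
  | 0 => gibbs N K β h t q A
  | j + 1 => fun Jc Js =>
      if hj : j < K then
        ∫ g : Fin N → ℝ,
          fWeight N K β h t q m (K - j) Jc (Function.update Js ⟨K - 1 - j, by omega⟩ g) *
            omT1 N K β h t q m A j Jc (Function.update Js ⟨K - 1 - j, by omega⟩ g)
          ∂gaussN N
      else omT1 N K β h t q m A j Jc Js

/-- `omT2 … A j` is the partially averaged two-replica state `Ω̃_{K-j}(A)`:
`Ω̃_K = Ω` and `Ω̃_{a-1}(·) = E_a (f_a Ω̃_a(·))`. -/
def omT2 (N K : ℕ) (β h t : ℝ) (q m : ℕ → ℝ) (A : (Fin N → Bool) → (Fin N → Bool) → ℝ) :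
    ℕ → (Fin N → Fin N → ℝ) → (Fin K → Fin N → ℝ) → ℝ
  | 0 => gibbs2 N K β h t q A
  | j + 1 => fun Jc Js =>
      if hj : j < K then
        ∫ g : Fin N → ℝ,
          fWeight N K β h t q m (K - j) Jc (Function.update Js ⟨K - 1 - j, by omega⟩ g) *
            omT2 N K β h t q m A j Jc (Function.update Js ⟨K - 1 - j, by omega⟩ g)
          ∂gaussN N
      else omT2 N K β h t q m A j Jc Js

/-- The deformed quenched average `⟨A⟩_a = E(f_1 ⋯ f_a Ω̃_a(A))` at interpolation
parameter `t`, for a function `A` of two replicas. -/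
def angA (N K : ℕ) (β h t : ℝ) (q m : ℕ → ℝ) (a : ℕ)
    (A : (Fin N → Bool) → (Fin N → Bool) → ℝ) : ℝ :=
  ∫ Jc, ∫ Js,
      (∏ b ∈ Finset.Icc 1 a, fWeight N K β h t q m b Jc Js) *
        omT2 N K β h t q m A (K - a) Jc Js
    ∂gaussS K N ∂gaussC N

/-! ## Zero temperature (ground state) objects -/

/-- The zero-temperature Parisi recursion: `parisiLevelBar K q m j` is `f̄(q_{K-j}, ·; x̄)`,
with final condition `f̄(q_K, y) = |y|`. -/
def parisiLevelBar (K : ℕ) (q m : ℕ → ℝ) : ℕ → ℝ → ℝ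
  | 0 => fun y => |y|
  | j + 1 => pStep (m (K - j)) (q (K - j) - q (K - j - 1)) (parisiLevelBar K q m j)

/-- A zero-temperature piecewise constant order parameter: nodes
`0 = q_0 ≤ … ≤ q_K = 1` and nondecreasing values `0 ≤ m̄_1 ≤ … ≤ m̄_K`
(no upper bound `1`), with the convention `m̄_0 = 0`. -/
structure ZeroTParam where
  K : ℕ
  hK : 1 ≤ K
  q : ℕ → ℝ
  m : ℕ → ℝ
  hq0 : q 0 = 0
  hqK : q K = 1
  hq_mono : ∀ a, a < K → q a ≤ q (a + 1)
  hm0 : m 0 = 0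
  hm1 : 0 ≤ m 1
  hm_mono : ∀ a, 1 ≤ a → a < K → m a ≤ m (a + 1)

/-- The zero-temperature trial function `α̃(h; x̄) = f̄(0, h; x̄) - (1/2) ∫₀¹ r x̄(r) dr`. -/
def gsTrial (K : ℕ) (q m : ℕ → ℝ) (h : ℝ) : ℝ :=
  parisiLevelBar K q m K h - 1 / 2 * ∫ r in (0 : ℝ)..1, r * xFun K q m r

/-! ## The p-spin model -/

/-- A piecewise constant functional order parameter on `[0, p/2]`:
`0 = q_0 ≤ … ≤ q_K = p/2` and `0 ≤ m_1 ≤ … ≤ m_K ≤ 1`. -/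
structure POrderParam (p : ℕ) where
  K : ℕ
  hK : 1 ≤ K
  q : ℕ → ℝ
  m : ℕ → ℝ
  hq0 : q 0 = 0
  hqK : q K = p / 2
  hq_mono : ∀ a, a < K → q a ≤ q (a + 1)
  hm1 : 0 ≤ m 1
  hm_mono : ∀ a, 1 ≤ a → a < K → m a ≤ m (a + 1)
  hmK : m K ≤ 1

/-- The p-spin Hamiltonian
`H_N(σ,h,J) = -(p!/(2N^{p-1}))^{1/2} ∑_{i_1<…<i_p} J_{i_1…i_p} σ_{i_1}⋯σ_{i_p} - h ∑_i σ_i`. -/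
def hamP (p N : ℕ) (h : ℝ) (J : Finset (Fin N) → ℝ) (σ : Fin N → Bool) : ℝ :=
  -Real.sqrt ((Nat.factorial p : ℝ) / (2 * (N : ℝ) ^ (p - 1))) *
      ∑ S ∈ Finset.powersetCard p (Finset.univ : Finset (Fin N)), J S * ∏ i ∈ S, spin (σ i)
    - h * ∑ i, spin (σ i)

/-- The p-spin partition function. -/
def ZP (p N : ℕ) (β h : ℝ) (J : Finset (Fin N) → ℝ) : ℝ :=
  ∑ σ : Fin N → Bool, Real.exp (-(β * hamP p N h J σ))

/-- The p-spin quenched average `N⁻¹ E log Z_N^{(p)}(β, h, J)`. -/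
def quenchedFEP (p N : ℕ) (β h : ℝ) : ℝ :=
  (N : ℝ)⁻¹ * ∫ J, Real.log (ZP p N β h J) ∂gaussP N

/-- The functional order parameter on `[0, p/2]` as a function. -/
def xFunP (p K : ℕ) (q m : ℕ → ℝ) (r : ℝ) : ℝ :=
  if (p : ℝ) / 2 ≤ r then m K else m (sInf {a : ℕ | r < q a})

/-- The change of variables `q̄(r)` defined by `2r = p q̄^{p-1}`. -/
def qBar (p : ℕ) (r : ℝ) : ℝ := (2 * r / p) ^ (((p : ℝ) - 1)⁻¹)

/-- The p-spin trial function
`ᾱ_p(β, h; x) = log 2 + f(0, h; x, β) - (β²/2) ∫₀^{p/2} q̄(r) x(r) dr`. -/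
def trialAlphaP (p K : ℕ) (q m : ℕ → ℝ) (β h : ℝ) : ℝ :=
  Real.log 2 + parisiLevel K q m β K h
    - β ^ 2 / 2 * ∫ r in (0 : ℝ)..((p : ℝ) / 2), qBar p r * xFunP p K q m r

/-! ## Proof of the `L¹` continuity -/

/-- Lipschitz functions, in the elementary form used below. -/
def LipR (L : ℝ) (g : ℝ → ℝ) : Prop := ∀ a b, |g a - g b| ≤ L * |a - b|

lemma LipR.cont {L : ℝ} {g : ℝ → ℝ} (hg : LipR L g) : Continuous g := by
  have : LipschitzWith (Real.toNNReal L) g := by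
    refine LipschitzWith.of_dist_le_mul fun a b => ?_
    rw [Real.dist_eq, Real.dist_eq]
    refine (hg a b).trans ?_
    gcongr
    exact Real.le_coe_toNNReal L
  exact this.continuous

lemma integrable_exp_abs (c : ℝ) : Integrable (fun z : ℝ => Real.exp (c * |z|)) stdGauss := by
  have h1 : Integrable (fun z : ℝ => Real.exp (c * z)) stdGauss :=
    integrable_exp_mul_gaussianReal c
  have h2 : Integrable (fun z : ℝ => Real.exp ((-c) * z)) stdGauss :=
    integrable_exp_mul_gaussianReal (-c)
  refine (h1.add h2).mono' (by fun_prop) (Eventually.of_forall fun z => ?_)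
  rw [Real.norm_eq_abs, abs_of_pos (Real.exp_pos _)]
  have p1 := Real.exp_pos (c * z)
  have p2 := Real.exp_pos ((-c) * z)
  simp only [Pi.add_apply]
  rcases abs_cases z with ⟨h, _⟩ | ⟨h, _⟩
  · rw [h]; linarith
  · rw [h, show c * -z = -c * z by ring]; linarith

/-- Continuous functions of at most exponential growth are integrable. -/
lemma integrable_of_growth {φ : ℝ → ℝ} (hφ : Continuous φ) (A B : ℝ)
    (h : ∀ z, |φ z| ≤ A * Real.exp (B * |z|)) : Integrable φ stdGauss :=
  ((integrable_exp_abs B).const_mul A).mono' hφ.aestronglyMeasurable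
    (Eventually.of_forall fun z => by rw [Real.norm_eq_abs]; exact h z)

lemma LipR.bd {L : ℝ} {g : ℝ → ℝ} (hg : LipR L g) (y s z : ℝ) :
    |g (y + z * Real.sqrt s) - g y| ≤ L * Real.sqrt s * |z| := by
  refine (hg _ _).trans (le_of_eq ?_)
  rw [add_sub_cancel_left, abs_mul, abs_of_nonneg (Real.sqrt_nonneg s)]; ring

lemma LipR.int_exp {L : ℝ} {g : ℝ → ℝ} (hg : LipR L g) (m y s : ℝ) :
    Integrable (fun z => Real.exp (m * g (y + z * Real.sqrt s))) stdGauss := by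
  have hc := hg.cont
  refine integrable_of_growth (by fun_prop) (Real.exp (m * g y)) (|m| * (L * Real.sqrt s))
    fun z => ?_
  rw [abs_of_pos (Real.exp_pos _), ← Real.exp_add, Real.exp_le_exp]
  have h1 : m * (g (y + z * Real.sqrt s) - g y) ≤ |m| * (L * Real.sqrt s * |z|) := by
    refine (le_abs_self _).trans ?_
    rw [abs_mul]
    exact mul_le_mul_of_nonneg_left (hg.bd y s z) (abs_nonneg m)
  nlinarith

lemma LipR.int {L : ℝ} {g : ℝ → ℝ} (hg : LipR L g) (y s : ℝ) :
    Integrable (fun z => g (y + z * Real.sqrt s)) stdGauss := by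
  have hc := hg.cont
  refine ((hg.int_exp 1 y s).add (hg.int_exp (-1) y s)).mono' (by fun_prop)
    (Eventually.of_forall fun z => ?_)
  rw [Real.norm_eq_abs]
  simp only [Pi.add_apply]
  set u := g (y + z * Real.sqrt s)
  have h1 := Real.add_one_le_exp (1 * u)
  have h2 := Real.add_one_le_exp (-1 * u)
  have h3 := Real.exp_pos (1 * u)
  have h4 := Real.exp_pos (-1 * u)
  rw [abs_le]; constructor <;> linarith

/-- The generalized mean underlying `pStep`. -/
def gmean (m : ℝ) (φ : ℝ → ℝ) : ℝ :=
  if m = 0 then ∫ z, φ z ∂stdGauss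
  else m⁻¹ * Real.log (∫ z, Real.exp (m * φ z) ∂stdGauss)

lemma pStep_eq (m s : ℝ) (g : ℝ → ℝ) (y : ℝ) :
    pStep m s g y = gmean m fun z => g (y + z * Real.sqrt s) := rfl

lemma int_exp_pos {φ : ℝ → ℝ} (h : Integrable (fun z => Real.exp (φ z)) stdGauss) :
    0 < ∫ z, Real.exp (φ z) ∂stdGauss := integral_exp_pos h

lemma gmean_le {m : ℝ} (hm : 0 ≤ m) {φ ψ : ℝ → ℝ} {D : ℝ}
    (hφ : Integrable φ stdGauss) (hψ : Integrable ψ stdGauss)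
    (hφe : Integrable (fun z => Real.exp (m * φ z)) stdGauss)
    (hψe : Integrable (fun z => Real.exp (m * ψ z)) stdGauss)
    (h : ∀ z, φ z ≤ ψ z + D) : gmean m φ ≤ gmean m ψ + D := by
  unfold gmean
  split_ifs with h0
  · calc ∫ z, φ z ∂stdGauss ≤ ∫ z, (ψ z + D) ∂stdGauss :=
          integral_mono hφ (hψ.add (integrable_const D)) h
      _ = _ := by rw [integral_add hψ (integrable_const D)]; simp
  · have hmp : 0 < m := lt_of_le_of_ne hm (Ne.symm h0)
    have h1 : ∫ z, Real.exp (m * φ z) ∂stdGauss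
        ≤ Real.exp (m * D) * ∫ z, Real.exp (m * ψ z) ∂stdGauss := by
      rw [← integral_const_mul]
      refine integral_mono hφe (hψe.const_mul _) fun z => ?_
      simp only
      rw [← Real.exp_add, Real.exp_le_exp]
      nlinarith [h z]
    have h2 := Real.log_le_log (int_exp_pos hφe) h1
    rw [Real.log_mul (Real.exp_pos _).ne' (int_exp_pos hψe).ne', Real.log_exp] at h2
    calc _ ≤ m⁻¹ * (m * D + Real.log (∫ z, Real.exp (m * ψ z) ∂stdGauss)) := by gcongr
      _ = _ := by field_simp; ring

lemma pStep_le {m s L L' D y y' : ℝ} (hm : 0 ≤ m) {g g' : ℝ → ℝ} (hg : LipR L g)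
    (hg' : LipR L' g')
    (h : ∀ z, g (y + z * Real.sqrt s) ≤ g' (y' + z * Real.sqrt s) + D) :
    pStep m s g y ≤ pStep m s g' y' + D :=
  gmean_le hm (hg.int y s) (hg'.int y' s) (hg.int_exp m y s) (hg'.int_exp m y' s) h

lemma pStep_contract {m s L L' D : ℝ} (hm : 0 ≤ m) {g g' : ℝ → ℝ} (hg : LipR L g)
    (hg' : LipR L' g') (h : ∀ y, |g y - g' y| ≤ D) (y : ℝ) :
    |pStep m s g y - pStep m s g' y| ≤ D := by
  rw [abs_le]
  constructor
  · have := pStep_le (s := s) (y := y) (y' := y) (D := D) hm hg' hg fun z => by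
      have := abs_le.1 (h (y + z * Real.sqrt s)); linarith
    linarith
  · have := pStep_le (s := s) (y := y) (y' := y) (D := D) hm hg hg' fun z => by
      have := abs_le.1 (h (y + z * Real.sqrt s)); linarith
    linarith

lemma pStep_lip {m s L : ℝ} (hm : 0 ≤ m) {g : ℝ → ℝ} (hg : LipR L g) :
    LipR L (pStep m s g) := by
  have key : ∀ a b, pStep m s g a ≤ pStep m s g b + L * |a - b| := fun a b =>
    pStep_le hm hg hg fun z => by
      have := hg (a + z * Real.sqrt s) (b + z * Real.sqrt s)
      rw [add_sub_add_right_eq_sub] at this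
      linarith [le_abs_self (g (a + z * Real.sqrt s) - g (b + z * Real.sqrt s))]
  intro a b
  have h1 := key a b
  have h2 := key b a
  rw [abs_sub_comm b a] at h2
  rw [abs_le]; constructor <;> linarith

lemma pStep_zero (m : ℝ) (g : ℝ → ℝ) : pStep m 0 g = g := by
  funext y
  unfold pStep
  split_ifs with h
  · simp
  · simp [h]

/-- Gaussian integrals in terms of `gaussianReal`. -/
lemma stdGauss_map (y s : ℝ) (hs : 0 ≤ s) :
    stdGauss.map (fun z => y + z * Real.sqrt s) = gaussianReal y (Real.toNNReal s) := by
  have h1 : stdGauss.map (fun z => z * Real.sqrt s) = gaussianReal 0 (Real.toNNReal s) := by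
    have := gaussianReal_map_mul_const (μ := 0) (v := 1) (Real.sqrt s)
    unfold stdGauss
    rw [this, mul_zero]
    congr 1
    ext
    simp [Real.sq_sqrt hs, hs]
  have h2 := gaussianReal_map_const_add (μ := 0) (v := Real.toNNReal s) y
  rw [← h1, Measure.map_map (by fun_prop) (by fun_prop), zero_add] at h2
  rw [← h2]; rfl

lemma integral_gauss (y s : ℝ) (hs : 0 ≤ s) {G : ℝ → ℝ} (hG : Continuous G) :
    ∫ z, G (y + z * Real.sqrt s) ∂stdGauss = ∫ x, G x ∂(gaussianReal y (Real.toNNReal s)) := by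
  rw [← stdGauss_map y s hs, integral_map (by fun_prop) hG.aestronglyMeasurable]

lemma integral_gauss_semigroup (y s t : ℝ) (hs : 0 ≤ s) (ht : 0 ≤ t) {G : ℝ → ℝ}
    (hG : Continuous G)
    (hi : Integrable (fun z => G (y + z * Real.sqrt (s + t))) stdGauss) :
    ∫ z, ∫ w, G (y + z * Real.sqrt s + w * Real.sqrt t) ∂stdGauss ∂stdGauss
      = ∫ z, G (y + z * Real.sqrt (s + t)) ∂stdGauss := by
  have hst := add_nonneg hs ht
  have hconv : gaussianReal y (Real.toNNReal (s + t))
      = (gaussianReal y (Real.toNNReal s)) ∗ (gaussianReal 0 (Real.toNNReal t)) := by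
    rw [gaussianReal_conv_gaussianReal, add_zero, Real.toNNReal_add hs ht]
  have hi' : Integrable G (gaussianReal y (Real.toNNReal (s + t))) := by
    rw [← stdGauss_map y _ hst, integrable_map_measure hG.aestronglyMeasurable (by fun_prop)]
    exact hi
  rw [integral_gauss y (s + t) hst hG, hconv, integral_conv (by rwa [← hconv]),
    ← stdGauss_map y s hs, integral_map (by fun_prop)]
  · congr 1; ext z
    rw [← stdGauss_map 0 t ht, integral_map (by fun_prop)]
    · simp
    · exact (hG.comp (by fun_prop)).aestronglyMeasurable
  · refine StronglyMeasurable.aestronglyMeasurable ?_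
    refine StronglyMeasurable.integral_prod_right (f := fun x y => G (x + y)) ?_
    exact (hG.comp (by fun_prop)).stronglyMeasurable

lemma pStep_semigroup {m s t L : ℝ} (hs : 0 ≤ s) (ht : 0 ≤ t) {g : ℝ → ℝ} (hg : LipR L g) :
    pStep m (s + t) g = pStep m s (pStep m t g) := by
  funext y
  have hc := hg.cont
  by_cases h0 : m = 0
  · subst h0
    simp only [pStep, if_true]
    exact (integral_gauss_semigroup y s t hs ht hc (hg.int _ _)).symm
  · have key := integral_gauss_semigroup y s t hs ht (G := fun x => Real.exp (m * g x))
      (by fun_prop) (hg.int_exp _ _ _)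
    have hx : ∀ u, Real.exp (m * pStep m t g u)
        = ∫ w, Real.exp (m * g (u + w * Real.sqrt t)) ∂stdGauss := by
      intro u
      simp only [pStep, if_neg h0]
      rw [mul_inv_cancel_left₀ h0, Real.exp_log (int_exp_pos (hg.int_exp _ _ _))]
    rw [pStep, if_neg h0, pStep, if_neg h0]
    simp only [hx]
    rw [key]

lemma logcosh_lip {β : ℝ} (hβ : 0 ≤ β) : LipR β (fun y => Real.log (Real.cosh (β * y))) := by
  have key : ∀ a b, Real.log (Real.cosh (β * a)) ≤ Real.log (Real.cosh (β * b)) + β * |a - b| := by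
    intro a b
    have h1 : Real.cosh (β * a) ≤ Real.cosh (β * b) * Real.exp (β * |a - b|) := by
      rw [Real.cosh_eq, Real.cosh_eq]
      have e1 : Real.exp (β * a) ≤ Real.exp (β * b) * Real.exp (β * |a - b|) := by
        rw [← Real.exp_add, Real.exp_le_exp]
        nlinarith [le_abs_self (a - b)]
      have e2 : Real.exp (-(β * a)) ≤ Real.exp (-(β * b)) * Real.exp (β * |a - b|) := by
        rw [← Real.exp_add, Real.exp_le_exp]
        nlinarith [neg_abs_le (a - b)]
      linarith
    have h2 := Real.log_le_log (Real.cosh_pos _) h1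
    rwa [Real.log_mul (Real.cosh_pos _).ne' (Real.exp_pos _).ne', Real.log_exp] at h2
  intro a b
  have h1 := key a b
  have h2 := key b a
  rw [abs_sub_comm b a] at h2
  simp only
  rw [abs_le]; constructor <;> linarith

lemma exp_third (x : ℝ) :
    |Real.exp x - 1 - x - x ^ 2 / 2| ≤ |x| ^ 3 * Real.exp |x| := by
  have h := Complex.norm_exp_sub_sum_le_norm_mul_exp (x : ℂ) 3
  have e : Complex.exp (x : ℂ) - ∑ k ∈ Finset.range 3, (x : ℂ) ^ k / (k.factorial : ℂ)
      = ((Real.exp x - 1 - x - x ^ 2 / 2 : ℝ) : ℂ) := by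
    simp [Finset.sum_range_succ, Nat.factorial]
    ring
  rw [e, Complex.norm_real, Complex.norm_real, Real.norm_eq_abs, Real.norm_eq_abs] at h
  exact h

/-- The constant in the third order remainder. -/
def remC (L : ℝ) : ℝ := ∫ z, (|z| + 1) ^ 3 * Real.exp (L * (|z| + 1)) ∂stdGauss

lemma remC_int (L : ℝ) :
    Integrable (fun z : ℝ => (|z| + 1) ^ 3 * Real.exp (L * (|z| + 1))) stdGauss := by
  refine integrable_of_growth (by fun_prop) (6 * Real.exp (L + 1)) (L + 1) fun z => ?_
  have hw : 0 ≤ |z| + 1 := by positivity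
  rw [abs_of_nonneg (by positivity)]
  have h1 : (|z| + 1) ^ 3 ≤ 6 * Real.exp (|z| + 1) := by
    have := Real.pow_div_factorial_le_exp (|z| + 1) hw 3
    simp [Nat.factorial] at this
    linarith
  calc (|z| + 1) ^ 3 * Real.exp (L * (|z| + 1))
      ≤ 6 * Real.exp (|z| + 1) * Real.exp (L * (|z| + 1)) := by gcongr
    _ = 6 * Real.exp (L + 1) * Real.exp ((L + 1) * |z|) := by
        rw [mul_assoc, mul_assoc, ← Real.exp_add, ← Real.exp_add]; congr 2; ring

lemma remC_nonneg (L : ℝ) : 0 ≤ remC L := integral_nonneg fun z => by positivity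

lemma cgf_expand {m d L : ℝ} (hm : 0 < m) (hm1 : m ≤ 1) (hd : 0 ≤ d) (hdL : d ≤ L) {V : ℝ → ℝ}
    (hV : Continuous V) (hb : ∀ z, |V z| ≤ d * (|z| + 1)) (h0 : ∫ z, V z ∂stdGauss = 0)
    (hVi : Integrable V stdGauss) (hV2 : Integrable (fun z => V z ^ 2) stdGauss)
    (hVe : Integrable (fun z => Real.exp (m * V z)) stdGauss)
    (hv : ∫ z, V z ^ 2 ∂stdGauss ≤ d ^ 2) :
    |m⁻¹ * Real.log (∫ z, Real.exp (m * V z) ∂stdGauss) - m / 2 * ∫ z, V z ^ 2 ∂stdGauss|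
      ≤ (remC L + L * (1 / 2 + L * remC L) ^ 2) * d ^ 3 := by
  set M := ∫ z, Real.exp (m * V z) ∂stdGauss with hM
  set v := ∫ z, V z ^ 2 ∂stdGauss with hvdef
  have hv0 : 0 ≤ v := integral_nonneg fun z => sq_nonneg _
  have hC := remC_nonneg L
  have hL : 0 ≤ L := hd.trans hdL
  set C := remC L with hCdef
  have hrem : |M - 1 - m ^ 2 * v / 2| ≤ m ^ 3 * d ^ 3 * C := by
    have e1 : M - 1 - m ^ 2 * v / 2
        = ∫ z, (Real.exp (m * V z) - 1 - m * V z - (m * V z) ^ 2 / 2) ∂stdGauss := by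
      have i1 : Integrable (fun _ : ℝ => (1 : ℝ)) stdGauss := integrable_const 1
      have i2 : Integrable (fun z => m * V z) stdGauss := hVi.const_mul m
      have i3 : Integrable (fun z => (m * V z) ^ 2 / 2) stdGauss := by
        have := hV2.const_mul (m ^ 2 / 2)
        refine this.congr (Eventually.of_forall fun z => ?_)
        simp only; ring
      have j1 : Integrable (fun z => Real.exp (m * V z) - 1) stdGauss := hVe.sub i1
      have j2 : Integrable (fun z => Real.exp (m * V z) - 1 - m * V z) stdGauss := j1.sub i2
      rw [integral_sub j2 i3, integral_sub j1 i2,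
        integral_sub hVe i1, integral_const_mul, h0]
      have e3 : ∫ z, (m * V z) ^ 2 / 2 ∂stdGauss = m ^ 2 * v / 2 := by
        rw [hvdef, ← integral_const_mul, ← integral_div]
        congr 1; ext z; ring
      rw [e3]; simp [hM]
    rw [e1, hCdef, remC, ← integral_const_mul, ← Real.norm_eq_abs]
    refine norm_integral_le_of_norm_le ((remC_int L).const_mul _)
      (Eventually.of_forall fun z => ?_)
    rw [Real.norm_eq_abs]
    refine (exp_third _).trans ?_
    have hw : 0 ≤ |z| + 1 := by positivity
    have a1 : |m * V z| ≤ m * (d * (|z| + 1)) := by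
      rw [abs_mul, abs_of_pos hm]
      exact mul_le_mul_of_nonneg_left (hb z) hm.le
    have a2 : |m * V z| ≤ L * (|z| + 1) := by
      refine a1.trans ?_
      have : m * d ≤ 1 * L := mul_le_mul hm1 hdL hd (by norm_num)
      nlinarith
    calc |m * V z| ^ 3 * Real.exp |m * V z|
        ≤ (m * (d * (|z| + 1))) ^ 3 * Real.exp (L * (|z| + 1)) := by gcongr
      _ = _ := by ring
  have hM1 : 1 ≤ M := by
    have i2 : Integrable (fun z => m * V z + 1) stdGauss :=
      (hVi.const_mul m).add (integrable_const 1)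
    have := integral_mono i2 hVe fun z => Real.add_one_le_exp (m * V z)
    rw [integral_add (hVi.const_mul m) (integrable_const 1), integral_const_mul, h0] at this
    simpa using this
  set u := M - 1 with hu
  have hu0 : 0 ≤ u := by linarith
  have hMu : M = 1 + u := by rw [hu]; ring
  obtain ⟨r1, r2⟩ := abs_le.1 hrem
  have hub : u ≤ m ^ 2 * d ^ 2 * (1 / 2 + L * C) := by
    have t1 : m ^ 3 * d ^ 3 * C ≤ m ^ 2 * d ^ 2 * (L * C) := by
      have : m * d ≤ 1 * L := mul_le_mul hm1 hdL hd (by norm_num)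
      have p : 0 ≤ m ^ 2 * d ^ 2 * C := by positivity
      nlinarith
    nlinarith [sq_nonneg m]
  have l1 : Real.log M ≤ u := by
    have := Real.log_le_sub_one_of_pos (show 0 < M by linarith)
    linarith
  have l2 : u - u ^ 2 ≤ Real.log M := by
    have h := Real.one_sub_inv_le_log_of_pos (show 0 < M by linarith)
    refine le_trans ?_ h
    have hp : 0 < M := by linarith
    rw [show 1 - M⁻¹ = u / M by field_simp; rw [hu], le_div_iff₀ hp, hMu]
    nlinarith [pow_nonneg hu0 3]
  have hu2 : u ^ 2 ≤ m ^ 4 * d ^ 4 * (1 / 2 + L * C) ^ 2 := by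
    calc u ^ 2 ≤ (m ^ 2 * d ^ 2 * (1 / 2 + L * C)) ^ 2 := by gcongr
      _ = _ := by ring
  set A := (1 / 2 + L * C) ^ 2 with hA
  have hA0 : 0 ≤ A := sq_nonneg _
  have main : |Real.log M - m ^ 2 * v / 2| ≤ m * ((C + L * A) * d ^ 3) := by
    have b1 : m ^ 3 * d ^ 3 * C ≤ m * (C * d ^ 3) := by
      have : m ^ 3 ≤ m := by
        calc m ^ 3 ≤ m ^ 1 := pow_le_pow_of_le_one hm.le hm1 (by norm_num)
          _ = m := pow_one m
      have p : 0 ≤ d ^ 3 * C := by positivity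
      nlinarith
    have b2 : m ^ 4 * d ^ 4 * A ≤ m * (L * A * d ^ 3) := by
      have : m ^ 4 ≤ m := by
        calc m ^ 4 ≤ m ^ 1 := pow_le_pow_of_le_one hm.le hm1 (by norm_num)
          _ = m := pow_one m
      calc m ^ 4 * d ^ 4 * A = m ^ 4 * (d * A * d ^ 3) := by ring
        _ ≤ m * (L * A * d ^ 3) := by gcongr
    have b3 : 0 ≤ m * (L * A * d ^ 3) := by positivity
    rw [abs_le]; constructor <;> nlinarith
  calc |m⁻¹ * Real.log M - m / 2 * v| = m⁻¹ * |Real.log M - m ^ 2 * v / 2| := by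
        rw [← abs_of_pos (inv_pos.2 hm), ← abs_mul, abs_of_pos (inv_pos.2 hm)]
        congr 1; field_simp
    _ ≤ m⁻¹ * (m * ((C + L * A) * d ^ 3)) := by gcongr
    _ = _ := by field_simp

/-- Total constant of the one step expansion. -/
def stepC (L : ℝ) : ℝ := remC L + L * (1 / 2 + L * remC L) ^ 2

lemma gauss_sq_int : Integrable (fun z : ℝ => z ^ 2) stdGauss := by
  refine integrable_of_growth (by fun_prop) 2 1 fun z => ?_
  have := Real.pow_div_factorial_le_exp |z| (abs_nonneg z) 2
  simp [Nat.factorial] at this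
  rw [abs_of_nonneg (sq_nonneg z), one_mul]; linarith

lemma gauss_sq : ∫ z, z ^ 2 ∂stdGauss = 1 := by
  have h := variance_id_gaussianReal (μ := 0) (v := 1)
  rw [variance_eq_integral (by fun_prop)] at h
  simpa [stdGauss] using h

lemma gauss_abs_int : Integrable (fun z : ℝ => |z|) stdGauss :=
  integrable_of_growth (by fun_prop) 1 1 fun z => by
    rw [abs_abs, one_mul, one_mul]; linarith [Real.add_one_le_exp |z|]

lemma gauss_abs : ∫ z, |z| ∂stdGauss ≤ 1 := by
  have : ∫ z, |z| ∂stdGauss ≤ ∫ z, (1 / 2 * z ^ 2 + 1 / 2) ∂stdGauss :=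
    integral_mono gauss_abs_int ((gauss_sq_int.const_mul _).add (integrable_const _)) fun z => by
      simp only
      nlinarith [sq_abs z, sq_nonneg (|z| - 1)]
  rw [integral_add (gauss_sq_int.const_mul _) (integrable_const _), integral_const_mul,
    gauss_sq] at this
  simp at this
  linarith

lemma pStep_expand {L h : ℝ} (hL : 0 ≤ L) (hh0 : 0 ≤ h) (hh1 : h ≤ 1) {g : ℝ → ℝ}
    (hg : LipR L g) (y : ℝ) :
    ∃ e v : ℝ, 0 ≤ v ∧ v ≤ L ^ 2 * h ∧ ∀ m, 0 ≤ m → m ≤ 1 →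
      |pStep m h g y - e - m / 2 * v| ≤ stepC L * (L * Real.sqrt h) ^ 3 := by
  have hc := hg.cont
  set d := L * Real.sqrt h with hd
  have hd0 : 0 ≤ d := by positivity
  have hs1 : Real.sqrt h ≤ 1 := by
    rw [Real.sqrt_le_left (by norm_num)]; simpa using hh1
  have hdL : d ≤ L := by nlinarith
  have hd2 : d ^ 2 = L ^ 2 * h := by rw [hd, mul_pow, Real.sq_sqrt hh0]
  set U : ℝ → ℝ := fun z => g (y + z * Real.sqrt h) with hU
  have hUc : Continuous U := by fun_prop
  have hUi : Integrable U stdGauss := hg.int y h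
  have hUb : ∀ z, |U z - g y| ≤ d * |z| := fun z => hg.bd y h z
  set e := ∫ z, U z ∂stdGauss with he
  have hUgi : Integrable (fun z => U z - g y) stdGauss := hUi.sub (integrable_const _)
  have hege : ∫ z, (U z - g y) ∂stdGauss = e - g y := by
    rw [integral_sub hUi (integrable_const _)]; simp [he]
  have heg : |e - g y| ≤ d := by
    rw [← hege, ← Real.norm_eq_abs]
    calc _ ≤ ∫ z, d * |z| ∂stdGauss :=
          norm_integral_le_of_norm_le (gauss_abs_int.const_mul d)
            (Eventually.of_forall fun z => by rw [Real.norm_eq_abs]; exact hUb z)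
      _ ≤ d := by
          rw [integral_const_mul]
          nlinarith [gauss_abs]
  set V : ℝ → ℝ := fun z => U z - e with hVd
  have hVc : Continuous V := by fun_prop
  have hVi : Integrable V stdGauss := hUi.sub (integrable_const _)
  have hV0 : ∫ z, V z ∂stdGauss = 0 := by
    simp only [hVd]
    rw [integral_sub hUi (integrable_const _)]; simp [he]
  have hVb : ∀ z, |V z| ≤ d * (|z| + 1) := fun z => by
    have : V z = (U z - g y) - (e - g y) := by simp only [hVd]; ring
    rw [this]
    refine (abs_sub _ _).trans ?_
    linarith [hUb z]
  have hsq : ∀ z, (U z - g y) ^ 2 ≤ d ^ 2 * z ^ 2 := fun z => by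
    rw [← sq_abs, ← sq_abs z, ← mul_pow]
    exact pow_le_pow_left₀ (abs_nonneg _) (hUb z) 2
  have hUg2 : Integrable (fun z => (U z - g y) ^ 2) stdGauss :=
    (gauss_sq_int.const_mul (d ^ 2)).mono' (by fun_prop)
      (Eventually.of_forall fun z => by
        rw [Real.norm_eq_abs, abs_of_nonneg (sq_nonneg _)]; exact hsq z)
  have hVexp : ∀ z, V z ^ 2
      = (U z - g y) ^ 2 - (2 * (e - g y)) * (U z - g y) + (e - g y) ^ 2 := fun z => by
    simp only [hVd]; ring
  have hV2 : Integrable (fun z => V z ^ 2) stdGauss := by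
    simp only [hVexp]
    exact (hUg2.sub (hUgi.const_mul _)).add (integrable_const _)
  have hv : ∫ z, V z ^ 2 ∂stdGauss ≤ d ^ 2 := by
    simp only [hVexp]
    have j1 : Integrable (fun z => (U z - g y) ^ 2 - (2 * (e - g y)) * (U z - g y)) stdGauss :=
      hUg2.sub (hUgi.const_mul _)
    rw [integral_add j1 (integrable_const _), integral_sub hUg2 (hUgi.const_mul _), integral_const_mul, hege]
    have : ∫ z, (U z - g y) ^ 2 ∂stdGauss ≤ d ^ 2 := by
      calc _ ≤ ∫ z, d ^ 2 * z ^ 2 ∂stdGauss :=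
            integral_mono hUg2 (gauss_sq_int.const_mul _) hsq
        _ = _ := by rw [integral_const_mul, gauss_sq, mul_one]
    simp only [integral_const, probReal_univ, smul_eq_mul, one_mul]
    nlinarith [sq_nonneg (e - g y)]
  refine ⟨e, ∫ z, V z ^ 2 ∂stdGauss, integral_nonneg fun z => sq_nonneg _, hd2 ▸ hv,
    fun m hm0 hm1 => ?_⟩
  have hC : 0 ≤ stepC L := by
    have := remC_nonneg L
    unfold stepC; positivity
  by_cases hm : m = 0
  · subst hm
    have : pStep 0 h g y = e := by simp [pStep, he, hU]
    rw [this]; simp; positivity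
  · have hmp : 0 < m := lt_of_le_of_ne hm0 (Ne.symm hm)
    have hUe : Integrable (fun z => Real.exp (m * U z)) stdGauss := hg.int_exp m y h
    have hfac : ∀ z, Real.exp (m * V z) = Real.exp (-(m * e)) * Real.exp (m * U z) := fun z => by
      rw [← Real.exp_add]; congr 1; simp only [hVd]; ring
    have hVe : Integrable (fun z => Real.exp (m * V z)) stdGauss := by
      simp only [hfac]; exact hUe.const_mul _
    have key := cgf_expand hmp hm1 hd0 hdL hVc hVb hV0 hVi hV2 hVe hv
    have hlog : m⁻¹ * Real.log (∫ z, Real.exp (m * V z) ∂stdGauss) = pStep m h g y - e := by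
      simp only [hfac]
      rw [integral_const_mul, Real.log_mul (Real.exp_pos _).ne' (int_exp_pos hUe).ne',
        Real.log_exp, pStep, if_neg hm]
      field_simp
      ring
    rw [hlog] at key
    exact key

lemma pStep_small {L h : ℝ} (hL : 0 ≤ L) (hh0 : 0 ≤ h) (hh1 : h ≤ 1) {g : ℝ → ℝ}
    (hg : LipR L g) {m m' : ℝ} (hm0 : 0 ≤ m) (hm1 : m ≤ 1) (hm0' : 0 ≤ m') (hm1' : m' ≤ 1)
    (y : ℝ) :
    |pStep m h g y - pStep m' h g y|
      ≤ L ^ 2 / 2 * h * |m - m'| + 2 * stepC L * (L * Real.sqrt h) ^ 3 := by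
  obtain ⟨e, v, hv0, hv, H⟩ := pStep_expand hL hh0 hh1 hg y
  have h1 := H m hm0 hm1
  have h2 := H m' hm0' hm1'
  have h3 : |(m - m') / 2 * v| ≤ L ^ 2 / 2 * h * |m - m'| := by
    rw [abs_mul, abs_div, abs_of_nonneg hv0, abs_two]
    nlinarith [abs_nonneg (m - m')]
  rw [abs_le] at *
  constructor <;> nlinarith

/-- `n` iterated small steps. -/
lemma pStep_iter {L h : ℝ} (hL : 0 ≤ L) (hh0 : 0 ≤ h) (hh1 : h ≤ 1) {g : ℝ → ℝ}
    (hg : LipR L g) {m m' : ℝ} (hm0 : 0 ≤ m) (hm1 : m ≤ 1) (hm0' : 0 ≤ m') (hm1' : m' ≤ 1)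
    (n : ℕ) : ∀ y, |pStep m (n * h) g y - pStep m' (n * h) g y|
      ≤ n * (L ^ 2 / 2 * h * |m - m'| + 2 * stepC L * (L * Real.sqrt h) ^ 3) := by
  induction n with
  | zero => intro y; simp [pStep_zero]
  | succ n ih =>
    intro y
    have hn : (0 : ℝ) ≤ n * h := by positivity
    have e : ((n + 1 : ℕ) : ℝ) * h = h + n * h := by push_cast; ring
    rw [e, pStep_semigroup hh0 hn hg, pStep_semigroup hh0 hn hg]
    have a1 := pStep_contract (s := h) hm0 (pStep_lip (s := n * h) hm0 hg)
      (pStep_lip (s := n * h) hm0' hg) ih y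
    have a2 := pStep_small hL hh0 hh1 (pStep_lip (s := n * h) hm0' hg) hm0 hm1 hm0' hm1' y
    push_cast
    have := abs_sub_le (pStep m h (pStep m (n * h) g) y) (pStep m h (pStep m' (n * h) g) y)
      (pStep m' h (pStep m' (n * h) g) y)
    linarith

lemma pStep_compare {L s : ℝ} (hL : 0 ≤ L) (hs0 : 0 ≤ s) (hs1 : s ≤ 1) {g : ℝ → ℝ}
    (hg : LipR L g) {m m' : ℝ} (hm0 : 0 ≤ m) (hm1 : m ≤ 1) (hm0' : 0 ≤ m') (hm1' : m' ≤ 1)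
    (y : ℝ) : |pStep m s g y - pStep m' s g y| ≤ L ^ 2 / 2 * s * |m - m'| := by
  set B := 2 * stepC L * (L * Real.sqrt s) ^ 3 with hB
  have key : ∀ k : ℕ, |pStep m s g y - pStep m' s g y|
      ≤ L ^ 2 / 2 * s * |m - m'| + B * (1 / ((k : ℝ) + 1)) := by
    intro k
    have hk : (0 : ℝ) < (k : ℝ) + 1 := by positivity
    have hk1 : (1 : ℝ) ≤ ((k : ℝ) + 1) ^ 2 := by
      have : (0 : ℝ) ≤ k := Nat.cast_nonneg k
      nlinarith
    have h := pStep_iter (h := s / ((k : ℝ) + 1) ^ 2) hL (by positivity)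
      ((div_le_one (by positivity)).2 (by linarith)) hg hm0 hm1 hm0' hm1' ((k + 1) ^ 2) y
    have e1 : (((k + 1) ^ 2 : ℕ) : ℝ) * (s / ((k : ℝ) + 1) ^ 2) = s := by
      push_cast; field_simp
    rw [e1, Real.sqrt_div' _ (by positivity), Real.sqrt_sq hk.le] at h
    refine h.trans (le_of_eq ?_)
    push_cast
    rw [hB]
    field_simp
  have lim : Tendsto (fun k : ℕ => L ^ 2 / 2 * s * |m - m'| + B * (1 / ((k : ℝ) + 1))) atTop
      (nhds (L ^ 2 / 2 * s * |m - m'| + B * 0)) :=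
    (tendsto_one_div_add_atTop_nhds_zero_nat.const_mul B).const_add _
  have := ge_of_tendsto' lim key
  simpa using this

namespace OrderParam

variable (X : OrderParam)

lemma q_mono' {a b : ℕ} (hab : a ≤ b) (hb : b ≤ X.K) : X.q a ≤ X.q b := by
  induction b, hab using Nat.le_induction with
  | base => exact le_rfl
  | succ n hn ih => exact (ih (by omega)).trans (X.hq_mono n (by omega))

lemma m_mono' {a b : ℕ} (ha : 1 ≤ a) (hab : a ≤ b) (hb : b ≤ X.K) : X.m a ≤ X.m b := by
  induction b, hab using Nat.le_induction with
  | base => exact le_rfl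
  | succ n hn ih => exact (ih (by omega)).trans (X.hm_mono n (by omega) (by omega))

lemma m_nonneg {a : ℕ} (hb : a ≤ X.K) : 0 ≤ X.m a := by
  rcases Nat.eq_zero_or_pos a with rfl | h
  · rw [X.hm0]
  · exact X.hm1.trans (X.m_mono' le_rfl h hb)

lemma m_le_one {a : ℕ} (ha : 1 ≤ a) (hb : a ≤ X.K) : X.m a ≤ 1 :=
  (X.m_mono' ha hb le_rfl).trans X.hmK

lemma level_lip {β : ℝ} (hβ : 0 ≤ β) (j : ℕ) : LipR β (parisiLevel X.K X.q X.m β j) := by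
  induction j with
  | zero => exact logcosh_lip hβ
  | succ j ih => exact pStep_lip (X.m_nonneg (Nat.sub_le _ _)) ih

lemma level_const (β : ℝ) {b a : ℕ} (hba : b ≤ a) (ha : a ≤ X.K) (h : X.q b = X.q a) :
    parisiLevel X.K X.q X.m β (X.K - b) = parisiLevel X.K X.q X.m β (X.K - a) := by
  induction a, hba using Nat.le_induction with
  | base => rfl
  | succ n hn ih =>
    have h1 := X.q_mono' hn (by omega)
    have h2 := X.hq_mono n (by omega)
    rw [ih (by omega) (by linarith)]
    have e : X.K - n = (X.K - (n + 1)) + 1 := by omega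
    rw [e, parisiLevel]
    have e2 : X.K - (X.K - (n + 1)) = n + 1 := by omega
    rw [e2, Nat.add_sub_cancel, show X.q (n + 1) - X.q n = 0 by linarith, pStep_zero]

/-- The Parisi function through any admissible interval of constancy. -/
lemma parisiF_eq (β : ℝ) {a : ℕ} (ha : a ≤ X.K) {r : ℝ}
    (h1 : X.q (a - 1) ≤ r) (h2 : r ≤ X.q a) :
    parisiF X.K X.q X.m β r
      = pStep (X.m a) (X.q a - r) (parisiLevel X.K X.q X.m β (X.K - a)) := by
  funext y
  unfold parisiF
  set b := sInf {a : ℕ | r ≤ X.q a} with hb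
  have hba : b ≤ a := Nat.sInf_le h2
  have hbm : r ≤ X.q b := Nat.sInf_mem (s := {a : ℕ | r ≤ X.q a}) ⟨a, h2⟩
  rcases hba.eq_or_lt with h | h
  · rw [h]
  · have h3 : X.q b ≤ X.q (a - 1) := X.q_mono' (by omega) (by omega)
    have hbr : X.q b = r := by linarith
    rcases h2.eq_or_lt with h4 | h4
    · rw [X.level_const β hba ha (by linarith), hbr, ← h4, sub_self, pStep_zero, pStep_zero]
    · have h5 : X.q (a - 1) = X.q b := by linarith
      have h6 := X.level_const β (b := b) (a := a - 1) (by omega) (by omega) h5.symm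
      rw [h6, hbr, sub_self, pStep_zero]
      have e : X.K - (a - 1) = (X.K - a) + 1 := by omega
      have e2 : X.K - (X.K - a) = a := by omega
      rw [e, parisiLevel, e2, h5, hbr]

lemma parisiF_lip {β : ℝ} (hβ : 0 ≤ β) {r : ℝ} (hr : r ≤ 1) :
    LipR β (parisiF X.K X.q X.m β r) := by
  have h : sInf {a : ℕ | r ≤ X.q a} ≤ X.K := Nat.sInf_le (by simpa [X.hqK] using hr)
  exact pStep_lip (X.m_nonneg h) (X.level_lip hβ _)

lemma parisiF_one (β : ℝ) :
    parisiF X.K X.q X.m β 1 = fun y => Real.log (Real.cosh (β * y)) := by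
  have h := X.q_mono' (Nat.sub_le X.K 1) le_rfl
  rw [X.hqK] at h
  rw [X.parisiF_eq β le_rfl h X.hqK.ge, X.hqK, sub_self, pStep_zero, Nat.sub_self]
  rfl

/-- Local structure on an interval without nodes in its interior. -/
lemma local_const {β : ℝ} (hβ : 0 ≤ β) {r r' : ℝ} (hr0 : 0 ≤ r) (hr : r < r') (hr1 : r' ≤ 1)
    (hnode : ∀ a ≤ X.K, r < X.q a → r' ≤ X.q a) :
    ∃ c, 0 ≤ c ∧ c ≤ 1 ∧ (∀ s ∈ Set.Ioo r r', xFun X.K X.q X.m s = c) ∧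
      parisiF X.K X.q X.m β r = pStep c (r' - r) (parisiF X.K X.q X.m β r') := by
  have hne : X.K ∈ {a : ℕ | r < X.q a} := by simp only [Set.mem_ofPred_eq, X.hqK]; linarith
  set a := sInf {a : ℕ | r < X.q a} with ha
  have haK : a ≤ X.K := Nat.sInf_le hne
  have ham : r < X.q a := Nat.sInf_mem (s := {a : ℕ | r < X.q a}) ⟨_, hne⟩
  have ha1 : 1 ≤ a := by
    rcases Nat.eq_zero_or_pos a with h | h
    · rw [h, X.hq0] at ham; linarith
    · exact h
  have hprev : X.q (a - 1) ≤ r := by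
    by_contra hcon
    have : a ≤ a - 1 := Nat.sInf_le (s := {a : ℕ | r < X.q a}) (not_le.1 hcon)
    omega
  have hra := hnode a haK ham
  refine ⟨X.m a, X.m_nonneg haK, X.m_le_one ha1 haK, fun s hs => ?_, ?_⟩
  · unfold xFun
    rw [if_neg (by linarith [hs.2])]
    have hsa : a ∈ {b : ℕ | s < X.q b} := lt_of_lt_of_le hs.2 hra
    congr 1
    apply le_antisymm (Nat.sInf_le hsa)
    have := Nat.sInf_mem (s := {b : ℕ | s < X.q b}) ⟨_, hsa⟩
    exact Nat.sInf_le (s := {a : ℕ | r < X.q a}) (lt_trans hs.1 this)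
  · rw [X.parisiF_eq β haK hprev ham.le, X.parisiF_eq β haK (hprev.trans hr.le) hra,
      ← pStep_semigroup (by linarith) (by linarith) (X.level_lip hβ _)]
    congr 1; ring

end OrderParam

/-- All nodes of the two order parameters. -/
def nodes (X Y : OrderParam) : Finset ℝ :=
  (Finset.range (X.K + 1)).image X.q ∪ (Finset.range (Y.K + 1)).image Y.q

lemma L1_aux (X Y : OrderParam) {β : ℝ} (hβ : 0 ≤ β) (n : ℕ) :
    ∀ r, 0 ≤ r → r ≤ 1 → ((nodes X Y).filter (fun t => r < t)).card = n →
      IntervalIntegrable (fun s => |xFun X.K X.q X.m s - xFun Y.K Y.q Y.m s|) volume r 1 ∧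
      ∀ y, |parisiF X.K X.q X.m β r y - parisiF Y.K Y.q Y.m β r y|
        ≤ β ^ 2 / 2 * ∫ s in r..1, |xFun X.K X.q X.m s - xFun Y.K Y.q Y.m s| := by
  induction n using Nat.strong_induction_on with
  | _ n ih =>
  intro r hr0 hr1 hcard
  rcases hr1.eq_or_lt with rfl | hlt
  · refine ⟨IntervalIntegrable.refl, fun y => ?_⟩
    rw [X.parisiF_one, Y.parisiF_one]; simp
  · set S := (nodes X Y).filter (fun t => r < t) with hS
    have h1S : (1 : ℝ) ∈ S := by
      simp only [hS, nodes, Finset.mem_filter, Finset.mem_union, Finset.mem_image,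
        Finset.mem_range]
      exact ⟨Or.inl ⟨X.K, by omega, X.hqK⟩, hlt⟩
    have hne : S.Nonempty := ⟨1, h1S⟩
    set r' := S.min' hne with hr'
    have hr'S : r' ∈ S := Finset.min'_mem S hne
    have hr'1 : r' ≤ 1 := Finset.min'_le S 1 h1S
    have hrr' : r < r' := (Finset.mem_filter.1 hr'S).2
    have hX : ∀ a ≤ X.K, r < X.q a → r' ≤ X.q a := fun a ha h =>
      Finset.min'_le S _ (by
        simp only [hS, nodes, Finset.mem_filter, Finset.mem_union, Finset.mem_image,
          Finset.mem_range]
        exact ⟨Or.inl ⟨a, by omega, rfl⟩, h⟩)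
    have hY : ∀ a ≤ Y.K, r < Y.q a → r' ≤ Y.q a := fun a ha h =>
      Finset.min'_le S _ (by
        simp only [hS, nodes, Finset.mem_filter, Finset.mem_union, Finset.mem_image,
          Finset.mem_range]
        exact ⟨Or.inr ⟨a, by omega, rfl⟩, h⟩)
    have hlt' : ((nodes X Y).filter (fun t => r' < t)).card < n := by
      rw [← hcard]
      refine Finset.card_lt_card (Finset.ssubset_iff_of_subset ?_ |>.2 ⟨r', hr'S, by simp⟩)
      intro t ht
      rw [Finset.mem_filter] at ht
      exact Finset.mem_filter.2 ⟨ht.1, hrr'.trans ht.2⟩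
    obtain ⟨hJrest, hbd⟩ := ih _ hlt' r' (by linarith) hr'1 rfl
    obtain ⟨c, hc0, hc1, hcx, hcf⟩ := X.local_const hβ hr0 hrr' hr'1 hX
    obtain ⟨c', hc0', hc1', hcx', hcf'⟩ := Y.local_const hβ hr0 hrr' hr'1 hY
    have hEq : Set.EqOn (fun _ => |c - c'|)
        (fun s => |xFun X.K X.q X.m s - xFun Y.K Y.q Y.m s|) (Set.uIoo r r') := by
      intro s hs
      rw [Set.uIoo_of_le hrr'.le] at hs
      simp only [hcx s hs, hcx' s hs]
    have hJone : IntervalIntegrable (fun s => |xFun X.K X.q X.m s - xFun Y.K Y.q Y.m s|)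
        volume r r' := (intervalIntegrable_const (c := |c - c'|)).congr_uIoo hEq
    refine ⟨hJone.trans hJrest, fun y => ?_⟩
    rw [← intervalIntegral.integral_add_adjacent_intervals hJone hJrest,
      ← intervalIntegral.integral_congr_uIoo hEq, intervalIntegral.integral_const, hcf, hcf',
      smul_eq_mul]
    have lX := X.parisiF_lip hβ hr'1
    have lY := Y.parisiF_lip hβ hr'1
    have a1 := pStep_contract (s := r' - r) hc0 lX lY hbd y
    have a2 := pStep_compare hβ (s := r' - r) (by linarith) (by linarith) lY hc0 hc1 hc0' hc1' y
    have := abs_sub_le (pStep c (r' - r) (parisiF X.K X.q X.m β r') y)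
      (pStep c (r' - r) (parisiF Y.K Y.q Y.m β r') y)
      (pStep c' (r' - r) (parisiF Y.K Y.q Y.m β r') y)
    linarith

/-- L¹ continuity of the Parisi function in the functional order parameter:
`|f(r, y; x, β) − f(r, y; x̄, β)| ≤ (β²/2) ∫_r^1 |x(r') − x̄(r')| dr'`
for every `r ∈ [0,1]`, `y ∈ ℝ` and `β ≥ 0`. -/
theorem parisiF_L1_continuity (X Y : OrderParam) (β : ℝ) (hβ : 0 ≤ β) :
    ∀ r ∈ Set.Icc (0 : ℝ) 1, ∀ y : ℝ,
      |parisiF X.K X.q X.m β r y - parisiF Y.K Y.q Y.m β r y|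
        ≤ β ^ 2 / 2 * ∫ s in r..1, |xFun X.K X.q X.m s - xFun Y.K Y.q Y.m s| := by
  intro r hr y
  exact (L1_aux X Y hβ _ r hr.1 hr.2 rfl).2 y

end
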